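/- Let H be a Hilbert space and let A : Dom(A) ⊆ H → H be a densely defined closable operator such that the image of A is contained in the kernel of A (i.e. A² = 0 on its domain, in the sense that Im(A) ⊆ Ker(A̅)). Let A* denote the adjoint. Then H decomposes orthogonally as H = (Ker(A̅) ∩ Ker(A*)) ⊕ closure(Im(A)) ⊕ closure(Im(A*)). -/

import Mathlib

open scoped RealInnerProductSpace

/-- The kernel of a partially defined linear operator, as a submodule of the ambient space. -/
def LinearPMap.kerSub {H : Type*} [NormedAddCommGroup H] [InnerProductSpace ℝ H]
    (A : H →ₗ.[ℝ] H) : Submodule ℝ H :=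
  (LinearMap.ker A.toFun).map A.domain.subtype

theorem Submodule.adjoint_adjoint {𝕜 E F : Type*} [RCLike 𝕜]
    [NormedAddCommGroup E] [InnerProductSpace 𝕜 E] [CompleteSpace E]
    [NormedAddCommGroup F] [InnerProductSpace 𝕜 F] [CompleteSpace F]
    (g : Submodule 𝕜 (E × F)) : g.adjoint.adjoint = g.topologicalClosure := by
  let e := WithLp.prodContinuousLinearEquiv 2 𝕜 E F
  let G : Submodule 𝕜 (WithLp 2 (E × F)) := g.comap (e : WithLp 2 (E × F) →ₗ[𝕜] E × F)
  have hG (w : WithLp 2 (E × F)) : w ∈ Gᗮ ↔ (w.snd, -w.fst) ∈ g.adjoint := by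
    rw [mem_orthogonal, mem_adjoint_iff]
    constructor
    · intro h a b hab
      simpa [WithLp.prod_inner_apply, add_comm] using h (WithLp.toLp 2 (a, b)) hab
    · intro h u hu
      simpa [WithLp.prod_inner_apply, add_comm] using h u.fst u.snd hu
  have hcl (x : E × F) : x ∈ g.topologicalClosure ↔ WithLp.toLp 2 x ∈ Gᗮᗮ := by
    rw [orthogonal_orthogonal_eq_closure, ← SetLike.mem_coe, ← SetLike.mem_coe,
      topologicalClosure_coe, topologicalClosure_coe]
    change _ ↔ _ ∈ closure (e.toHomeomorph ⁻¹' (g : Set (E × F)))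
    rw [← e.toHomeomorph.preimage_closure]
    rfl
  ext x
  rw [hcl, mem_orthogonal, mem_adjoint_iff]
  constructor
  · intro h w hw
    have := h _ _ ((hG w).1 hw)
    rw [inner_neg_left, ← neg_add', neg_eq_zero] at this
    simpa [WithLp.prod_inner_apply] using this
  · intro h c d hcd
    have := h (WithLp.toLp 2 (-d, c)) ((hG _).2 (by simpa using hcd))
    rw [← neg_eq_zero, neg_sub]
    simpa [WithLp.prod_inner_apply, add_comm, ← sub_eq_add_neg] using this

theorem Submodule.prod_zero_mem_adjoint_graph_iff {𝕜 E F : Type*} [RCLike 𝕜]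
    [NormedAddCommGroup E] [InnerProductSpace 𝕜 E]
    [NormedAddCommGroup F] [InnerProductSpace 𝕜 F] {A : E →ₗ.[𝕜] F} {x : F} :
    (x, (0 : E)) ∈ A.graph.adjoint ↔ x ∈ (LinearMap.range A.toFun)ᗮ := by
  rw [mem_adjoint_iff, mem_orthogonal]
  constructor
  · rintro h _ ⟨a, rfl⟩
    simpa using h a (A a) (A.mem_graph a)
  · intro h a b hab
    obtain ⟨y, rfl, rfl⟩ := (LinearPMap.mem_graph_iff A).1 hab
    simpa using h _ ⟨y, rfl⟩

namespace LinearPMap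

variable {H : Type*} [NormedAddCommGroup H] [InnerProductSpace ℝ H]

theorem mem_kerSub_iff {A : H →ₗ.[ℝ] H} {x : H} : x ∈ A.kerSub ↔ (x, (0 : H)) ∈ A.graph := by
  simp only [kerSub, Submodule.mem_map, LinearMap.mem_ker, mem_graph_iff, Submodule.subtype_apply,
    toFun_eq_coe, and_comm]

variable [CompleteSpace H]

theorem kerSub_adjoint {A : H →ₗ.[ℝ] H} (hA : Dense (A.domain : Set H)) :
    A.adjoint.kerSub = (LinearMap.range A.toFun)ᗮ := by
  ext x
  rw [mem_kerSub_iff, A.adjoint_graph_eq_graph_adjoint hA,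
    Submodule.prod_zero_mem_adjoint_graph_iff]

theorem kerSub_closure {A : H →ₗ.[ℝ] H} (hA : Dense (A.domain : Set H)) (hc : A.IsClosable) :
    A.closure.kerSub = (LinearMap.range A.adjoint.toFun)ᗮ := by
  ext x
  rw [mem_kerSub_iff, ← hc.graph_closure_eq_closure_graph, ← Submodule.adjoint_adjoint,
    ← A.adjoint_graph_eq_graph_adjoint hA, Submodule.prod_zero_mem_adjoint_graph_iff]

end LinearPMap

theorem Submodule.IsOrtho.orthogonal_inf_sup_sup_eq_top {𝕜 E : Type*} [RCLike 𝕜]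
    [NormedAddCommGroup E] [InnerProductSpace 𝕜 E] {K L : Submodule 𝕜 E}
    [K.HasOrthogonalProjection] [L.HasOrthogonalProjection] (h : K ⟂ L) :
    (Lᗮ ⊓ Kᗮ) ⊔ K ⊔ L = ⊤ := by
  refine eq_top_iff.2 fun z _ => ?_
  have hK := K.starProjection_apply_mem z
  have hL := L.starProjection_apply_mem z
  have hz : z - K.starProjection z - L.starProjection z ∈ Lᗮ ⊓ Kᗮ := by
    refine ⟨?_, sub_mem (K.sub_starProjection_mem_orthogonal z) (h.symm hL)⟩
    rw [sub_right_comm]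
    exact sub_mem (L.sub_starProjection_mem_orthogonal z) (h hK)
  have := add_mem_sup (add_mem_sup hz hK) hL
  rwa [sub_add_eq_add_sub, sub_add_cancel, sub_add_cancel] at this

/-- If `A` is a densely defined closable operator on a Hilbert space with
`Im(A) ⊆ Ker(A̅)` (i.e. `A² = 0`), then `H` decomposes orthogonally as
`(Ker(A̅) ∩ Ker(A*)) ⊕ closure(Im A) ⊕ closure(Im A*)`. -/
theorem stmt_0 {H : Type*} [NormedAddCommGroup H] [InnerProductSpace ℝ H]
    [CompleteSpace H] (A : H →ₗ.[ℝ] H)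
    (hdense : Dense (A.domain : Set H))
    (hclosable : A.IsClosable)
    (hrange : (LinearMap.range A.toFun : Set H) ⊆ (A.closure.kerSub : Set H)) :
    (A.closure.kerSub ⊓ A.adjoint.kerSub) ≤ ((LinearMap.range A.toFun).topologicalClosure)ᗮ ∧
    (A.closure.kerSub ⊓ A.adjoint.kerSub) ≤
      ((LinearMap.range A.adjoint.toFun).topologicalClosure)ᗮ ∧
    (LinearMap.range A.toFun).topologicalClosure ≤
      ((LinearMap.range A.adjoint.toFun).topologicalClosure)ᗮ ∧
    (A.closure.kerSub ⊓ A.adjoint.kerSub) ⊔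
      (LinearMap.range A.toFun).topologicalClosure ⊔
      (LinearMap.range A.adjoint.toFun).topologicalClosure = ⊤ := by
  rw [LinearPMap.kerSub_closure hdense hclosable] at hrange ⊢
  rw [LinearPMap.kerSub_adjoint hdense, Submodule.orthogonal_closure, Submodule.orthogonal_closure]
  have hle : (LinearMap.range A.toFun).topologicalClosure ≤ (LinearMap.range A.adjoint.toFun)ᗮ :=
    Submodule.topologicalClosure_minimal _ hrange (Submodule.isClosed_orthogonal _)
  refine ⟨inf_le_right, inf_le_left, hle, ?_⟩
  have hKL : (LinearMap.range A.toFun).topologicalClosure ⟂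
      (LinearMap.range A.adjoint.toFun).topologicalClosure := by
    rwa [Submodule.isOrtho_iff_le, Submodule.orthogonal_closure]
  simpa only [Submodule.orthogonal_closure] using hKL.orthogonal_inf_sup_sup_eq_top
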